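/- arXiv:1812.04705 — 2 statements merged into one kernel-verified Lean document; each statement's English description precedes it below -/
import Mathlib

section
/- Let β = (β_1,β_2,β_3) be a composition of length 3 with all parts at least 2, let m be its largest part and a, b the other two parts. Then the connected ribbon R_β has full Schur support [β^+, (|β|−2, 2)], except exactly when m ≥ a + b and m occurs as the first or the last entry of β; in those exceptional cases the partition ν = (m, a+b) lies in the Schur interval [β^+, (|β|−2, 2)] but not in the Schur support [R_β]. -/
namespace RibbonSupport

/-- A partition: a weakly decreasing list of positive integers. -/
def IsPartition (a : List ℕ) : Prop := a.Pairwise (· ≥ ·) ∧ ∀ x ∈ a, 0 < x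

/-- All parts of the list are at least `m`. -/
def PartsGE (a : List ℕ) (m : ℕ) : Prop := ∀ x ∈ a, m ≤ x

/-- Dominance order `lam ⪯ mu` on partitions of the same size. -/
def DomLE (lam mu : List ℕ) : Prop :=
  lam.sum = mu.sum ∧ ∀ i, (lam.take i).sum ≤ (mu.take i).sum

/-- The number of nonzero parts. -/
def lenp (p : List ℕ) : ℕ := p.countP (fun x => decide (x ≠ 0))

/-- `p` is an overlapping partition for the monotone ribbon with row lengths `a`:
`p` has the same length as `a`, its last entry is `0`, and consecutive entries
decrease by `0` or `1`. -/
def IsOverlapSeq (a p : List ℕ) : Prop :=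
  p.length = a.length ∧ p.getD (a.length - 1) 0 = 0 ∧
    ∀ i, i + 1 < a.length →
      p.getD i 0 = p.getD (i + 1) 0 ∨ p.getD i 0 = p.getD (i + 1) 0 + 1

/-- Rows `i` and `i+1` (0-based, top to bottom) of `R_a^p` overlap
(share exactly one column) exactly when `p_i = p_{i+1} + 1`. -/
def ovOf (p : List ℕ) : ℕ → Bool := fun i => decide (p.getD i 0 = p.getD (i + 1) 0 + 1)

def rowOffset (a : List ℕ) (i : ℕ) : ℕ := (a.take i).sum

/-- `w` is the reading word (rows right-to-left, top to bottom) of a semistandard filling of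
the ribbon with row lengths `a` (top to bottom) in which consecutive rows `i`, `i+1` share
exactly one column when `ov i = true` and no column otherwise.  Semistandardness amounts to:
within each row block the word is weakly decreasing (rows weakly increase left to right), and
at each overlapping gap the word strictly increases (columns strictly increase downwards). -/
def IsRibbonWord (a : List ℕ) (ov : ℕ → Bool) (w : List ℕ) : Prop :=
  w.length = a.sum ∧
  (∀ i j, i < a.length → j + 1 < a.getD i 0 →
    w.getD (rowOffset a i + j + 1) 0 ≤ w.getD (rowOffset a i + j) 0) ∧
  (∀ i, i + 1 < a.length → ov i = true →
    w.getD (rowOffset a (i + 1) - 1) 0 < w.getD (rowOffset a (i + 1)) 0)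

/-- Yamanouchi (lattice) word: each prefix has at least as many letters `j` as `j+1`. -/
def IsYam (w : List ℕ) : Prop := ∀ k j, (w.take k).count (j + 2) ≤ (w.take k).count (j + 1)

/-- The word `w` has content `nu` (and only positive letters). -/
def HasContent (w : List ℕ) (nu : List ℕ) : Prop :=
  (∀ j, w.count (j + 1) = nu.getD j 0) ∧ w.count 0 = 0

/-- There is an LR filling of the ribbon `(a, ov)` with content `nu`. -/
def InSupportOv (a : List ℕ) (ov : ℕ → Bool) (nu : List ℕ) : Prop :=
  ∃ w : List ℕ, IsRibbonWord a ov w ∧ IsYam w ∧ HasContent w nu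

/-- `nu` is in the Schur support of the monotone ribbon `R_a^p`. -/
def InSupport (a p nu : List ℕ) : Prop := InSupportOv a (ovOf p) nu

/-- `nu` is in the Schur support of the connected ribbon `R_a`. -/
def InSupportConn (a nu : List ℕ) : Prop := InSupportOv a (fun _ => true) nu

/-- `nu` belongs to the Schur interval `[a, (|a| - p₁, p₁)]` in dominance order. -/
def InInterval (a p nu : List ℕ) : Prop :=
  DomLE a nu ∧ DomLE nu [a.sum - p.getD 0 0, p.getD 0 0]

/-- The Schur support of `R_a^p`, as a set of partitions. -/
def SupportSet (a p : List ℕ) : Set (List ℕ) := {nu | IsPartition nu ∧ InSupport a p nu}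

/-- The Schur interval of `R_a^p`, as a set of partitions. -/
def IntervalSet (a p : List ℕ) : Set (List ℕ) := {nu | IsPartition nu ∧ InInterval a p nu}

/-- `R_a^p` has full Schur support. -/
def FullSupport (a p : List ℕ) : Prop := SupportSet a p = IntervalSet a p

/-- The Schur support of the connected ribbon `R_a`, as a set of partitions. -/
def SupportSetConn (a : List ℕ) : Set (List ℕ) := {nu | IsPartition nu ∧ InSupportConn a nu}

/-- `ϱ_i` (1-based `i`): `Σ_{q=i+1}^{ℓ(a)} a_q − p_{i+1} + 1`. -/
def rho (a p : List ℕ) (i : ℕ) : ℕ := (a.drop i).sum + 1 - p.getD i 0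

/-- Entry `j` (1-based) of the `i`-witness vector: `[ϱ_i − a_j]₊`. -/
def wit (a p : List ℕ) (i j : ℕ) : ℕ := rho a p i - a.getD (j - 1) 0

/-- Size of the `i`-witness vector. -/
def witSize (a p : List ℕ) (i : ℕ) : ℕ := ∑ j ∈ Finset.Icc 1 i, wit a p i j

/-! ### Tableaux -/

/-- Cells (0-based `(row, column)`) of the Young diagram of `lam`. -/
def cells (lam : List ℕ) : Finset (ℕ × ℕ) :=
  (Finset.range lam.length ×ˢ Finset.range (lam.sum + 1)).filter
    (fun x => x.2 < lam.getD x.1 0)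

/-- `T` is a semistandard Young tableau of shape `lam` and content `al`
(normalized to vanish off the diagram). -/
def IsTab (lam al : List ℕ) (T : ℕ × ℕ → ℕ) : Prop :=
  (∀ x, x ∉ cells lam → T x = 0) ∧
  (∀ x ∈ cells lam, 1 ≤ T x) ∧
  (∀ i c, (i, c + 1) ∈ cells lam → T (i, c) ≤ T (i, c + 1)) ∧
  (∀ i c, (i + 1, c) ∈ cells lam → T (i, c) < T (i + 1, c)) ∧
  (∀ k, ((cells lam).filter (fun x => T x = k + 1)).card = al.getD k 0)

/-- Standardization of a tableau: entries are renumbered `1, …, N` in increasing order of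
value, entries of equal value being numbered from southwest to northeast (by column). -/
def stdz (lam : List ℕ) (T : ℕ × ℕ → ℕ) : ℕ × ℕ → ℕ := fun x =>
  if x ∈ cells lam then
    ((cells lam).filter (fun y => T y < T x ∨ (T y = T x ∧ y.2 < x.2))).card + 1
  else 0

/-- `n` is a descent of the standard tableau `U`: the entry `n+1` lies in a strictly
lower row than the entry `n`. -/
def IsDescent (lam : List ℕ) (U : ℕ × ℕ → ℕ) (n : ℕ) : Prop :=
  ∃ x ∈ cells lam, ∃ y ∈ cells lam, U x = n ∧ U y = n + 1 ∧ x.1 < y.1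

/-- `S(al)`: the set of proper partial sums of the composition `al`. -/
def Sset (al : List ℕ) : Set ℕ := {n | ∃ k, 0 < k ∧ k < al.length ∧ n = (al.take k).sum}

/-- `s ∈ D(T)`: some entry `s+1` of `T` lies in a strictly lower row than some entry `s`. -/
def TabDescent (lam : List ℕ) (T : ℕ × ℕ → ℕ) (s : ℕ) : Prop :=
  ∃ x ∈ cells lam, ∃ y ∈ cells lam, T x = s ∧ T y = s + 1 ∧ x.1 < y.1

/-- The word `w_{T̂}` of `T`: its `u`-th letter (1-based) is the 1-based row index of the
entry `u` of the standardization `T̂` of `T`. -/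
def wordOf (lam : List ℕ) (T : ℕ × ℕ → ℕ) : List ℕ :=
  (List.range lam.sum).map fun n =>
    ∑ x ∈ (cells lam).filter (fun x => stdz lam T x = n + 1), (x.1 + 1)

/-- `j ∈ {2, …, ℓ(al)}` is a critical number of `T ∈ Tab(lam, al)`:
`w_{α_1+⋯+α_{j-1}} = w_{α_1+⋯+α_{j-1}+1}` in the word of `T`. -/
def CriticalNum (lam al : List ℕ) (T : ℕ × ℕ → ℕ) (j : ℕ) : Prop :=
  2 ≤ j ∧ j ≤ al.length ∧
    (wordOf lam T).getD ((al.take (j - 1)).sum - 1) 0 =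
      (wordOf lam T).getD ((al.take (j - 1)).sum) 0

/-- `j ∈ {2, …, ℓ(al)}` is a negligible critical number of `T`:
`w_{α_1+⋯+α_{j-1}} > w_{α_1+⋯+α_{j-1}+1}` in the word of `T`. -/
def NegligibleNum (lam al : List ℕ) (T : ℕ × ℕ → ℕ) (j : ℕ) : Prop :=
  2 ≤ j ∧ j ≤ al.length ∧
    (wordOf lam T).getD ((al.take (j - 1)).sum) 0 <
      (wordOf lam T).getD ((al.take (j - 1)).sum - 1) 0

/-- The overlapping partition of the ribbon encoded by its gap pattern `b`
(`b j = true` iff rows `j` and `j+1`, 0-based, overlap). -/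
def povOf (b : List Bool) : List ℕ :=
  (List.range (b.length + 1)).map fun i => (b.drop i).count true

/-! ### Connected ribbons with rows in arbitrary order -/

/-- Starting column (0-based) of row `i` of the connected ribbon with row lengths `b`. -/
def startConn (b : List ℕ) (i : ℕ) : ℕ := (b.drop (i + 1)).sum + (i + 1) - b.length

/-- Number of columns of the connected ribbon with row lengths `b`. -/
def ncols (b : List ℕ) : ℕ := b.sum + 1 - b.length

/-- Length of column `c` of the connected ribbon with row lengths `b`. -/
def colLen (b : List ℕ) (c : ℕ) : ℕ :=
  ((Finset.range b.length).filter
    (fun i => startConn b i ≤ c ∧ c < startConn b i + b.getD i 0)).card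

/-- Deletion rank of row `j`: the number of rows deleted strictly before row `j` when one
repeatedly deletes a longest remaining row in highest (most northern) position. -/
def delRank (g : List ℕ) (j : ℕ) : ℕ :=
  ((Finset.range g.length).filter
    (fun j' => g.getD j 0 < g.getD j' 0 ∨ (g.getD j' 0 = g.getD j 0 ∧ j' < j))).card

/-- The overlapping partition of the connected ribbon with row lengths `g`:
its `(d+1)`-st entry is the number of length-two columns of the ribbon remaining
after deleting `d` rows as above, i.e. the number of adjacent pairs of surviving rows. -/
def ppiList (g : List ℕ) : List ℕ :=
  (List.range g.length).map fun d =>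
    ((Finset.range (g.length - 1)).filter
      (fun j => d ≤ delRank g j ∧ d ≤ delRank g (j + 1))).card


/-! The lattice condition bounds the letters of the `i`-th row by `i`, so every LR filling of a
connected ribbon with rows `x, y, z` has the rows `1^x`, `2^s 1^r` and `3^t 2^u 1^v` (read right to
left), and it is an LR filling under a few linear inequalities in these multiplicities.
Eliminating the multiplicities, the support turns out to be the dominance interval with the
two-part partitions `(n₁, n₂)` such that `n₁ ≤ max x z` removed: if no `3` occurs, the second row
must end with `1`, so `n₁ = x + r + v > x`, and `s + u ≤ x + r` with `s > 0` gives `n₁ > z`. Such a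
partition exists in the interval exactly when `x + y + z ≤ 2 * max x z`, and it is then
`(max x z, x + y + z - max x z)`. -/

/-! ### Reading words cut into rows -/

theorem forall_getD_succ_le_iff_pairwise {R : List ℕ} :
    (∀ j, j + 1 < R.length → R.getD (j + 1) 0 ≤ R.getD j 0) ↔ R.Pairwise (· ≥ ·) := by
  rw [← List.isChain_iff_pairwise, List.isChain_iff_getElem]
  refine forall₂_congr fun j hj => ?_
  rw [List.getD_eq_getElem _ _ hj, List.getD_eq_getElem _ _ (by omega)]

theorem getD_flatten_rowOffset_add {rows : List (List ℕ)} {i j : ℕ} (hi : i < rows.length)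
    (hj : j < rows[i].length) :
    rows.flatten.getD (rowOffset (rows.map List.length) i + j) 0 = rows[i].getD j 0 := by
  induction rows generalizing i with
  | nil => simp at hi
  | cons R rows ih =>
    cases i with
    | zero =>
      simp only [List.getElem_cons_zero] at hj
      simp only [rowOffset, List.take_zero, List.sum_nil, zero_add, List.flatten_cons,
        List.getElem_cons_zero]
      exact List.getD_append _ _ _ _ hj
    | succ i =>
      simp only [List.length_cons, Nat.add_lt_add_iff_right] at hi
      simp only [List.getElem_cons_succ] at hj ⊢
      have hoffset : rowOffset ((R :: rows).map List.length) (i + 1) + j =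
          R.length + (rowOffset (rows.map List.length) i + j) := by
        simp [rowOffset, add_assoc]
      rw [hoffset, ← ih hi hj, List.flatten_cons, List.getD_append_right _ _ _ _ (by omega),
        Nat.add_sub_cancel_left]

theorem rowOffset_map_length_succ {rows : List (List ℕ)} {i : ℕ} (hi : i < rows.length) :
    rowOffset (rows.map List.length) (i + 1) =
      rowOffset (rows.map List.length) i + rows[i].length := by
  simp [rowOffset, List.sum_take_succ _ i (show i < (rows.map List.length).length by simpa)]

theorem isRibbonWord_flatten_iff {rows : List (List ℕ)} {ov : ℕ → Bool} (hne : [] ∉ rows) :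
    IsRibbonWord (rows.map List.length) ov rows.flatten ↔
      (∀ R ∈ rows, R.Pairwise (· ≥ ·)) ∧
      ∀ i (hi : i + 1 < rows.length), ov i = true →
        rows[i].getLastD 0 < rows[i + 1].headD 0 := by
  have hpos : ∀ i (hi : i < rows.length), 0 < rows[i].length := fun i hi =>
    List.length_pos_of_ne_nil (ne_of_mem_of_not_mem (List.getElem_mem hi) hne)
  have hrow : ∀ i (hi : i < rows.length), (rows.map List.length).getD i 0 = rows[i].length :=
    fun i hi => by simp [hi]
  rw [IsRibbonWord, List.length_flatten, List.length_map, List.forall_mem_iff_forall_getElem]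
  simp only [true_and]
  refine and_congr ?_ ?_
  · rw [forall_congr' fun i => forall_comm (α := ℕ)]
    refine forall₂_congr fun i hi => ?_
    rw [← forall_getD_succ_le_iff_pairwise, hrow i hi]
    refine forall₂_congr fun j hj => ?_
    rw [add_assoc, getD_flatten_rowOffset_add hi hj,
      getD_flatten_rowOffset_add hi (by omega)]
  · refine forall₃_congr fun i hi _ => ?_
    have hi' : i < rows.length := by omega
    have hhead := getD_flatten_rowOffset_add hi (hpos _ hi)
    have hlast := getD_flatten_rowOffset_add hi' (Nat.sub_one_lt_of_lt (hpos i hi'))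
    rw [← Nat.add_sub_assoc (hpos i hi'), ← rowOffset_map_length_succ] at hlast
    rw [add_zero] at hhead
    rw [hhead, hlast, List.getLastD_eq_getLast?, List.getLast?_eq_getElem?,
      List.headD_eq_head?_getD, List.head?_eq_getElem?, List.getD_eq_getElem?_getD,
      List.getD_eq_getElem?_getD]

/-! ### Partial sums and parts -/

theorem sum_take_succ_getD (l : List ℕ) (i : ℕ) :
    (l.take (i + 1)).sum = (l.take i).sum + l.getD i 0 := by
  rw [List.take_add_one, List.sum_append, List.getD_eq_getElem?_getD]
  cases l[i]? <;> simp

theorem sum_eq_of_length_le_three {l : List ℕ} (hl : l.length ≤ 3) :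
    l.sum = l.getD 0 0 + l.getD 1 0 + l.getD 2 0 := by
  conv_lhs => rw [← List.take_of_length_le hl]
  simp only [sum_take_succ_getD, List.take_zero, List.sum_nil, zero_add]

theorem IsPartition.getD_succ_le {nu : List ℕ} (h : IsPartition nu) (i : ℕ) :
    nu.getD (i + 1) 0 ≤ nu.getD i 0 := by
  by_cases hi : i + 1 < nu.length
  · exact forall_getD_succ_le_iff_pairwise.2 h.1 i hi
  · rw [List.getD_eq_default _ _ (by omega)]
    exact Nat.zero_le _

/-! ### Lattice words -/

theorem IsYam.count_le {p q : List ℕ} (h : IsYam (p ++ q)) (j : ℕ) :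
    p.count (j + 2) ≤ p.count (j + 1) := by
  simpa using h p.length j

theorem IsYam.le_succ_of_mem_row {P R Q : List ℕ} {k : ℕ} (h : IsYam (P ++ (R ++ Q)))
    (hP : ∀ a ∈ P, a ≤ k) (hR : R.Pairwise (· ≥ ·)) : ∀ a ∈ R, a ≤ k + 1 := by
  cases R with
  | nil => simp
  | cons c R =>
    have hc : c ≤ k + 1 := by
      by_contra! hck
      obtain ⟨j, rfl⟩ : ∃ j, c = j + 2 := ⟨c - 2, by omega⟩
      have hcount := IsYam.count_le (p := P ++ [j + 2]) (q := R ++ Q) (by simpa using h) j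
      have habsent : P.count (j + 1) = 0 :=
        List.count_eq_zero.2 fun hmem => by have := hP _ hmem; omega
      simp [habsent] at hcount
    exact List.forall_mem_cons.2 ⟨hc, fun a ha => (List.rel_of_pairwise_cons hR ha).le.trans hc⟩

theorem IsYam.le_succ_of_mem_getElem {rows : List (List ℕ)} (h : IsYam rows.flatten)
    (hrows : ∀ R ∈ rows, R.Pairwise (· ≥ ·)) {i : ℕ} (hi : i < rows.length) :
    ∀ a ∈ rows[i], a ≤ i + 1 := by
  induction i using Nat.strong_induction_on with
  | _ i ih =>
    have hsplit : rows.flatten =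
        (rows.take i).flatten ++ (rows[i] ++ (rows.drop (i + 1)).flatten) := by
      rw [← List.flatten_cons, ← List.drop_eq_getElem_cons, ← List.flatten_append,
        List.take_append_drop]
    refine IsYam.le_succ_of_mem_row (hsplit ▸ h) (fun a ha => ?_) (hrows _ (List.getElem_mem hi))
    obtain ⟨R, hR, haR⟩ := List.mem_flatten.1 ha
    obtain ⟨j, hj, rfl⟩ := List.mem_take_iff_getElem.1 hR
    have := ih j (by omega) (by omega) a haR
    omega

theorem exists_eq_replicate_append_of_pairwise_ge {L : List ℕ} {n : ℕ} (hL : L.Pairwise (· ≥ ·))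
    (hn : ∀ a ∈ L, a ≤ n + 1) :
    ∃ t M, L = List.replicate t (n + 1) ++ M ∧ M.Pairwise (· ≥ ·) ∧ ∀ a ∈ M, a ≤ n := by
  induction L with
  | nil => exact ⟨0, [], by simp⟩
  | cons a L ih =>
    obtain ⟨ha, hLn⟩ := List.forall_mem_cons.1 hn
    obtain ⟨haL, hL'⟩ := List.pairwise_cons.1 hL
    rcases ha.eq_or_lt with rfl | ha
    · obtain ⟨t, M, rfl, hM⟩ := ih hL' hLn
      exact ⟨t + 1, M, by simp [List.replicate_succ], hM⟩
    · refine ⟨0, a :: L, by simp, hL, List.forall_mem_cons.2 ⟨by omega, fun c hc => ?_⟩⟩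
      have := haL c hc
      omega

/-! ### LR fillings of connected ribbons with three rows -/

/-- The rows, from top to bottom and each read from right to left, of a three-row filling whose
`i`-th row has letters at most `i`: `1^x`, then `2^s 1^r`, then `3^t 2^u 1^v`. -/
def lrRows (x s r t u v : ℕ) : List (List ℕ) :=
  [List.replicate x 1, List.replicate s 2 ++ List.replicate r 1,
    List.replicate t 3 ++ (List.replicate u 2 ++ List.replicate v 1)]

section LRRows

variable {x s r t u v : ℕ}

theorem isRibbonWord_lrRows_iff (hx : 0 < x) (hy : 0 < s + r) (hz : 0 < t + u + v) :
    IsRibbonWord [x, s + r, t + u + v] (fun _ => true) (lrRows x s r t u v).flatten ↔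
      0 < s ∧ 0 < t + u ∧ (r = 0 → 0 < t) := by
  have hlengths : [x, s + r, t + u + v] = (lrRows x s r t u v).map List.length := by
    simp [lrRows, add_assoc]
  have hne : [] ∉ lrRows x s r t u v := by
    simp only [lrRows, List.mem_cons, List.nil_eq, List.replicate_eq_nil_iff,
      List.append_eq_nil_iff, List.not_mem_nil, or_false]
    omega
  have hsorted : ∀ R ∈ lrRows x s r t u v, R.Pairwise (· ≥ ·) := by
    simp only [lrRows, List.forall_mem_cons, List.pairwise_append, List.pairwise_replicate,
      List.mem_append, List.mem_replicate]
    grind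
  rw [hlengths, isRibbonWord_flatten_iff hne, and_iff_right hsorted]
  have hgap₁ : (List.replicate x 1).getLastD 0 <
      (List.replicate s 2 ++ List.replicate r 1).headD 0 ↔ 0 < s := by
    simp only [List.getLastD_eq_getLast?, List.headD_eq_head?_getD, List.head?_append,
      List.getLast?_replicate, List.head?_replicate]
    split_ifs <;>
      simp only [Option.some_or, Option.none_or, Option.getD_some, Option.getD_none] <;> omega
  have hgap₂ : (List.replicate s 2 ++ List.replicate r 1).getLastD 0 <
      (List.replicate t 3 ++ (List.replicate u 2 ++ List.replicate v 1)).headD 0 ↔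
      0 < t + u ∧ (r = 0 → 0 < t) := by
    simp only [List.getLastD_eq_getLast?, List.headD_eq_head?_getD, List.getLast?_append,
      List.head?_append, List.getLast?_replicate, List.head?_replicate]
    split_ifs <;>
      simp only [Option.some_or, Option.none_or, Option.getD_some, Option.getD_none] <;> omega
  have hchain := List.isChain_iff_getElem (l := lrRows x s r t u v)
    (R := fun R S => R.getLastD 0 < S.headD 0)
  simp only [true_imp_iff, ← hchain]
  simp only [lrRows, List.isChain_cons_cons, List.isChain_singleton, and_true, hgap₁, hgap₂]

theorem count_take_flatten_lrRows (k a : ℕ) :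
    ((lrRows x s r t u v).flatten.take k).count a =
      (if 1 = a then min k x + min (k - x - s) r + min (k - x - s - r - t - u) v else 0) +
      (if 2 = a then min (k - x) s + min (k - x - s - r - t) u else 0) +
      (if 3 = a then min (k - x - s - r) t else 0) := by
  simp only [lrRows, List.flatten_cons, List.flatten_nil, List.append_nil, List.append_assoc,
    List.take_append, List.take_replicate, List.length_replicate, List.count_append,
    List.count_replicate, beq_iff_eq]
  split_ifs <;> omega

theorem isYam_lrRows_iff :
    IsYam (lrRows x s r t u v).flatten ↔ s ≤ x ∧ t ≤ s ∧ s + u ≤ x + r := by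
  simp only [IsYam, count_take_flatten_lrRows]
  constructor
  · intro h
    have h₁ := h (x + s) 0
    have h₂ := h (x + s + r + t) 1
    have h₃ := h (x + s + r + t + u) 0
    simp only [Nat.reduceAdd, Nat.reduceEqDiff, if_true, if_false] at h₁ h₂ h₃
    omega
  · rintro ⟨h₁, h₂, h₃⟩ k j
    split_ifs <;> omega

theorem count_flatten_lrRows (a : ℕ) :
    (lrRows x s r t u v).flatten.count a =
      (if 1 = a then x + r + v else 0) + (if 2 = a then s + u else 0) +
      (if 3 = a then t else 0) := by
  simp only [lrRows, List.flatten_cons, List.flatten_nil, List.append_nil, List.append_assoc,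
    List.count_append, List.count_replicate, beq_iff_eq]
  split_ifs <;> omega

theorem hasContent_lrRows_iff {nu : List ℕ} (hnu : IsPartition nu) :
    HasContent (lrRows x s r t u v).flatten nu ↔
      nu.length ≤ 3 ∧ nu.getD 0 0 = x + r + v ∧ nu.getD 1 0 = s + u ∧ nu.getD 2 0 = t := by
  simp only [HasContent, count_flatten_lrRows]
  constructor
  · rintro ⟨hcount, -⟩
    refine ⟨?_, (hcount 0).symm, by simpa using (hcount 1).symm, by simpa using (hcount 2).symm⟩
    by_contra! hlen
    have hfourth := hcount 3
    rw [List.getD_eq_getElem _ _ hlen] at hfourth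
    exact (hnu.2 _ (List.getElem_mem hlen)).ne hfourth
  · rintro ⟨hlen, h₁, h₂, h₃⟩
    refine ⟨?_, by simp⟩
    rintro (_ | _ | _ | j)
    · simpa using h₁.symm
    · simpa using h₂.symm
    · simpa using h₃.symm
    · rw [List.getD_eq_default _ _ (by omega)]
      split_ifs <;> omega

end LRRows

section ThreeRows

variable {x y z : ℕ}

theorem exists_eq_flatten_lrRows {w : List ℕ} (hx : 0 < x) (hy : 0 < y) (hz : 0 < z)
    (hw : IsRibbonWord [x, y, z] (fun _ => true) w) (hyam : IsYam w) (h0 : w.count 0 = 0) :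
    ∃ s r t u v, y = s + r ∧ z = t + u + v ∧ w = (lrRows x s r t u v).flatten := by
  obtain ⟨A, B, C, rfl, rfl, rfl, rfl⟩ : ∃ A B C : List ℕ,
      x = A.length ∧ y = B.length ∧ z = C.length ∧ w = [A, B, C].flatten := by
    have hlen := hw.1
    simp only [List.sum_cons, List.sum_nil] at hlen
    refine ⟨w.take x, (w.drop x).take y, (w.drop x).drop y, ?_, ?_, ?_, by simp⟩ <;>
      simp only [List.length_take, List.length_drop] <;> omega
  have hne : [] ∉ [A, B, C] := by
    simp only [List.mem_cons, List.not_mem_nil, or_false, not_or]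
    exact ⟨(List.ne_nil_of_length_pos hx).symm, (List.ne_nil_of_length_pos hy).symm,
      (List.ne_nil_of_length_pos hz).symm⟩
  have hsorted := ((isRibbonWord_flatten_iff hne).1 hw).1
  have hpos : ∀ a ∈ [A, B, C].flatten, 0 < a := fun a ha =>
    Nat.pos_of_ne_zero (ne_of_mem_of_not_mem ha (List.count_eq_zero.1 h0))
  have hconst : ∀ L : List ℕ, L ⊆ [A, B, C].flatten → (∀ a ∈ L, a ≤ 1) →
      L = List.replicate L.length 1 := fun L hL hle =>
    List.eq_replicate_of_mem fun a ha => by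
      have := hpos a (hL ha)
      have := hle a ha
      omega
  have hA := hyam.le_succ_of_mem_getElem hsorted (i := 0) (by simp)
  have hB := hyam.le_succ_of_mem_getElem hsorted (i := 1) (by simp)
  have hC := hyam.le_succ_of_mem_getElem hsorted (i := 2) (by simp)
  obtain ⟨s, B₁, hB₁, -, hle⟩ := exists_eq_replicate_append_of_pairwise_ge (hsorted B (by simp)) hB
  obtain ⟨t, C₂, hC₂, hsorted₂, hle₂⟩ :=
    exists_eq_replicate_append_of_pairwise_ge (hsorted C (by simp)) hC
  obtain ⟨u, C₁, hC₁, -, hle₁⟩ := exists_eq_replicate_append_of_pairwise_ge hsorted₂ hle₂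
  have eA := hconst A (fun a ha => by simp [ha]) hA
  have eB := hconst B₁ (fun a ha => by simp [hB₁, ha]) hle
  have eC := hconst C₁ (fun a ha => by simp [hC₂, hC₁, ha]) hle₁
  refine ⟨s, B₁.length, t, u, C₁.length, by simp [hB₁], by simp [hC₂, hC₁, add_assoc], ?_⟩
  rw [lrRows, ← eA, ← eB, ← eC, ← hC₁, ← hC₂, ← hB₁]

theorem inSupportConn_iff_exists_multiplicities {nu : List ℕ} (hx : 0 < x) (hy : 0 < y)
    (hz : 0 < z) (hnu : IsPartition nu) :
    InSupportConn [x, y, z] nu ↔ ∃ s r t u v, y = s + r ∧ z = t + u + v ∧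
      (0 < s ∧ 0 < t + u ∧ (r = 0 → 0 < t)) ∧ (s ≤ x ∧ t ≤ s ∧ s + u ≤ x + r) ∧
      nu.length ≤ 3 ∧ nu.getD 0 0 = x + r + v ∧ nu.getD 1 0 = s + u ∧ nu.getD 2 0 = t := by
  constructor
  · rintro ⟨w, hw, hyam, hcontent⟩
    obtain ⟨s, r, t, u, v, rfl, rfl, rfl⟩ := exists_eq_flatten_lrRows hx hy hz hw hyam hcontent.2
    exact ⟨s, r, t, u, v, rfl, rfl, (isRibbonWord_lrRows_iff hx hy hz).1 hw,
      isYam_lrRows_iff.1 hyam, (hasContent_lrRows_iff hnu).1 hcontent⟩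
  · rintro ⟨s, r, t, u, v, rfl, rfl, hw, hyam, hcontent⟩
    exact ⟨_, (isRibbonWord_lrRows_iff hx hy hz).2 hw, isYam_lrRows_iff.2 hyam,
      (hasContent_lrRows_iff hnu).2 hcontent⟩

theorem inSupportConn_iff_parts {nu : List ℕ} (hx : 0 < x) (hy : 2 ≤ y) (hz : 0 < z)
    (hnu : IsPartition nu) :
    InSupportConn [x, y, z] nu ↔
      (nu.length ≤ 3 ∧ nu.sum = x + y + z ∧ max x (max y z) ≤ nu.getD 0 0 ∧
        nu.getD 2 0 ≤ min x (min y z) ∧ nu.getD 0 0 + 2 ≤ x + y + z) ∧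
      (nu.getD 2 0 = 0 → max x z < nu.getD 0 0) := by
  rw [inSupportConn_iff_exists_multiplicities hx (by omega) hz hnu]
  have h₂₁ := hnu.getD_succ_le 0
  have h₃₂ := hnu.getD_succ_le 1
  constructor
  · rintro ⟨s, r, t, u, v, rfl, rfl, hw, hyam, hlen, h₁, h₂, h₃⟩
    have hsum := sum_eq_of_length_le_three hlen
    omega
  · rintro ⟨⟨hlen, hsum, hmax, hmin, htop⟩, hcorner⟩
    rw [sum_eq_of_length_le_three hlen] at hsum
    generalize nu.getD 0 0 = n₁, nu.getD 1 0 = n₂, nu.getD 2 0 = n₃ at *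
    obtain ⟨s, hs⟩ : ∃ s, s = max (max 1 n₃) (n₂ + n₃ - z) := ⟨_, rfl⟩
    exact ⟨s, y - s, n₃, n₂ - s, z - n₃ - (n₂ - s), by omega⟩

end ThreeRows

/-! ### Dominance intervals -/

theorem domLE_pair_iff {nu : List ℕ} {c d : ℕ} :
    DomLE nu [c, d] ↔ nu.sum = c + d ∧ nu.getD 0 0 ≤ c := by
  constructor
  · rintro ⟨hsum, htake⟩
    exact ⟨by simpa using hsum, by simpa [sum_take_succ_getD] using htake 1⟩
  · rintro ⟨hsum, hc⟩
    refine ⟨by simpa using hsum, ?_⟩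
    rintro (_ | _ | i)
    · simp
    · simpa [sum_take_succ_getD] using hc
    · simpa [← hsum] using (List.take_sublist (i + 2) nu).sum_le_sum (by simp)

theorem DomLE.length_le {lam mu : List ℕ} (h : DomLE lam mu) (hmu : ∀ a ∈ mu, 0 < a) :
    mu.length ≤ lam.length := by
  have htake := h.2 lam.length
  rw [List.take_length, h.1, ← List.sum_take_add_sum_drop mu lam.length] at htake
  have hdrop : (mu.drop lam.length).sum = 0 := by omega
  by_contra! hlen
  have hmem : mu[lam.length] ∈ mu.drop lam.length := by
    rw [List.drop_eq_getElem_cons hlen]; exact List.mem_cons_self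
  exact (hmu _ (List.getElem_mem hlen)).ne' (List.sum_eq_zero_iff.1 hdrop _ hmem)

theorem domLE_triple_iff {p q r : ℕ} {nu : List ℕ} (hnu : ∀ a ∈ nu, 0 < a) :
    DomLE [p, q, r] nu ↔
      nu.length ≤ 3 ∧ nu.sum = p + q + r ∧ p ≤ nu.getD 0 0 ∧ nu.getD 2 0 ≤ r := by
  constructor
  · intro h
    have hlen : nu.length ≤ 3 := h.length_le hnu
    have hsum := sum_eq_of_length_le_three hlen
    have htotal : p + (q + r) = nu.sum := by simpa using h.1
    have h₁ : p ≤ nu.getD 0 0 := by simpa [sum_take_succ_getD] using h.2 1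
    have h₂ : p + q ≤ nu.getD 0 0 + nu.getD 1 0 := by simpa [sum_take_succ_getD] using h.2 2
    omega
  · rintro ⟨hlen, hsum, hp, hr⟩
    have hparts := sum_eq_of_length_le_three hlen
    have htotal : [p, q, r].sum = nu.sum := by rw [hsum]; simp [add_assoc]
    refine ⟨htotal, ?_⟩
    rintro (_ | _ | _ | i)
    · simp
    · simpa [sum_take_succ_getD] using hp
    · simp only [sum_take_succ_getD, List.take_zero, List.sum_nil, zero_add,
        List.getD_cons_zero, List.getD_cons_succ]
      omega
    · rw [List.take_of_length_le (l := nu) (by omega), List.take_of_length_le (by simp), htotal]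

section SortedTriple

variable {x y z : ℕ} {bp : List ℕ}

theorem exists_eq_triple_of_perm_of_pairwise_ge (hperm : bp.Perm [x, y, z])
    (hsort : bp.Pairwise (· ≥ ·)) :
    ∃ p q r, bp = [p, q, r] ∧ p + q + r = x + y + z ∧ p = max x (max y z) ∧
      r = min x (min y z) := by
  obtain ⟨p, q, r, rfl⟩ := List.length_eq_three.1 (hperm.length_eq.trans (by simp))
  refine ⟨p, q, r, rfl, ?_⟩
  have hsum := hperm.sum_eq
  have hp : p ∈ [x, y, z] := hperm.subset (by simp)
  have hr : r ∈ [x, y, z] := hperm.subset (by simp)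
  have hx : x ∈ [p, q, r] := hperm.symm.subset (by simp)
  have hy : y ∈ [p, q, r] := hperm.symm.subset (by simp)
  have hz : z ∈ [p, q, r] := hperm.symm.subset (by simp)
  simp only [List.mem_cons, List.not_mem_nil, or_false, List.pairwise_cons, forall_eq_or_imp,
    forall_eq, List.sum_cons, List.sum_nil] at hp hr hx hy hz hsort hsum
  omega

theorem domLE_interval_iff {k : ℕ} {nu : List ℕ} (hk : k ≤ x + y + z)
    (hperm : bp.Perm [x, y, z]) (hsort : bp.Pairwise (· ≥ ·)) (hnu : ∀ a ∈ nu, 0 < a) :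
    DomLE bp nu ∧ DomLE nu [x + y + z - k, k] ↔
      nu.length ≤ 3 ∧ nu.sum = x + y + z ∧ max x (max y z) ≤ nu.getD 0 0 ∧
        nu.getD 2 0 ≤ min x (min y z) ∧ nu.getD 0 0 + k ≤ x + y + z := by
  obtain ⟨p, q, r, rfl, hsum, rfl, rfl⟩ := exists_eq_triple_of_perm_of_pairwise_ge hperm hsort
  rw [domLE_triple_iff hnu, domLE_pair_iff, hsum]
  omega

end SortedTriple

/-! ### Support against interval -/

section Classification

variable {x y z : ℕ} {bp : List ℕ}

theorem inSupportConn_iff_interval {nu : List ℕ} (hx : 0 < x) (hy : 2 ≤ y) (hz : 0 < z)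
    (hperm : bp.Perm [x, y, z]) (hsort : bp.Pairwise (· ≥ ·)) (hnu : IsPartition nu) :
    InSupportConn [x, y, z] nu ↔
      (DomLE bp nu ∧ DomLE nu [x + y + z - 2, 2]) ∧
        (nu.getD 2 0 = 0 → max x z < nu.getD 0 0) := by
  rw [inSupportConn_iff_parts hx hy hz hnu, domLE_interval_iff (by omega) hperm hsort hnu.2]

theorem isPartition_corner (hx : 0 < x) (hy : 0 < y) (hlong : x + y + z ≤ 2 * max x z) :
    IsPartition [max x z, x + y + z - max x z] := by
  simp only [IsPartition, List.pairwise_pair, List.forall_mem_cons, List.not_mem_nil,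
    false_imp_iff, implies_true, and_true]
  omega

theorem domLE_interval_corner (hx : 0 < x) (hy : 2 ≤ y) (hlong : x + y + z ≤ 2 * max x z)
    (hperm : bp.Perm [x, y, z]) (hsort : bp.Pairwise (· ≥ ·)) :
    DomLE bp [max x z, x + y + z - max x z] ∧
      DomLE [max x z, x + y + z - max x z] [x + y + z - 2, 2] := by
  rw [domLE_interval_iff (by omega) hperm hsort (isPartition_corner hx (by omega) hlong).2]
  refine ⟨by simp, ?_, ?_, by simp, ?_⟩ <;>
    simp only [List.sum_cons, List.sum_nil, List.getD_cons_zero] <;> omega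

theorem not_inSupportConn_corner (hx : 0 < x) (hy : 2 ≤ y) (hz : 0 < z)
    (hlong : x + y + z ≤ 2 * max x z) :
    ¬ InSupportConn [x, y, z] [max x z, x + y + z - max x z] := by
  rw [inSupportConn_iff_parts hx hy hz (isPartition_corner hx (by omega) hlong)]
  simp

theorem supportSetConn_eq_interval_iff (hx : 0 < x) (hy : 2 ≤ y) (hz : 0 < z)
    (hperm : bp.Perm [x, y, z]) (hsort : bp.Pairwise (· ≥ ·)) :
    SupportSetConn [x, y, z] =
        {nu | IsPartition nu ∧ DomLE bp nu ∧ DomLE nu [x + y + z - 2, 2]} ↔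
      ¬ x + y + z ≤ 2 * max x z := by
  constructor
  · intro hfull hlong
    have hcorner : [max x z, x + y + z - max x z] ∈ SupportSetConn [x, y, z] :=
      hfull ▸ ⟨isPartition_corner hx (by omega) hlong,
        domLE_interval_corner hx hy hlong hperm hsort⟩
    exact not_inSupportConn_corner hx hy hz hlong hcorner.2
  · intro hshort
    ext nu
    refine and_congr_right fun hnu => ?_
    rw [inSupportConn_iff_interval hx hy hz hperm hsort hnu, and_iff_left_iff_imp,
      domLE_interval_iff (by omega) hperm hsort hnu.2]
    rintro ⟨hlen, hsum, -⟩ h₃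
    have h₂₁ : nu.getD 1 0 ≤ nu.getD 0 0 := hnu.getD_succ_le 0
    rw [sum_eq_of_length_le_three hlen] at hsum
    omega

end Classification

theorem length_three_full_support_classification_general (x y z : ℕ) (hx : 0 < x) (hy : 2 ≤ y)
    (hz : 0 < z) (m : ℕ) (hm : m = max (max x y) z) :
    ((∀ bp : List ℕ, bp.Perm [x, y, z] → bp.Pairwise (· ≥ ·) →
        SupportSetConn [x, y, z] =
          {nu | IsPartition nu ∧ DomLE bp nu ∧ DomLE nu [[x, y, z].sum - 2, 2]}) ↔
      ¬ ([x, y, z].sum ≤ 2 * m ∧ (x = m ∨ z = m))) ∧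
    (([x, y, z].sum ≤ 2 * m ∧ (x = m ∨ z = m)) →
      (∀ bp : List ℕ, bp.Perm [x, y, z] → bp.Pairwise (· ≥ ·) →
        DomLE bp [m, [x, y, z].sum - m] ∧
          DomLE [m, [x, y, z].sum - m] [[x, y, z].sum - 2, 2]) ∧
      ¬ InSupportConn [x, y, z] [m, [x, y, z].sum - m]) := by
  have hsum : [x, y, z].sum = x + y + z := by simp [add_assoc]
  have hexceptional : (x + y + z ≤ 2 * m ∧ (x = m ∨ z = m)) ↔ x + y + z ≤ 2 * max x z := by omega
  rw [hsum, hexceptional]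
  refine ⟨⟨fun hfull => ?_, fun hshort bp hperm hsort =>
    (supportSetConn_eq_interval_iff hx hy hz hperm hsort).2 hshort⟩, fun hlong => ?_⟩
  · have hperm := List.perm_insertionSort (· ≥ ·) [x, y, z]
    have hsort := List.pairwise_insertionSort (· ≥ ·) [x, y, z]
    exact (supportSetConn_eq_interval_iff hx hy hz hperm hsort).1 (hfull _ hperm hsort)
  · obtain rfl : m = max x z := by omega
    exact ⟨fun bp hperm hsort => domLE_interval_corner hx hy hlong hperm hsort,
      not_inSupportConn_corner hx hy hz hlong⟩

/-- Corollary `cor:length3`: let `b = (b₁,b₂,b₃)` be a composition of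
length 3 with parts ≥ 2, `m` its largest part.  Then the connected ribbon `R_b` has full
Schur support `[b⁺, (|b|−2, 2)]` except exactly when `m ≥ (sum of the other two parts)` and
`m` occurs as the first or the last entry of `b`; and in those exceptional cases the
partition `(m, |b|−m)` lies in the Schur interval but not in the Schur support of `R_b`. -/
theorem length_three_full_support_classification
    (b : List ℕ) (hlen : b.length = 3) (h2 : PartsGE b 2)
    (m : ℕ) (hm : m = max (max (b.getD 0 0) (b.getD 1 0)) (b.getD 2 0)) :
    ((∀ bp : List ℕ, bp.Perm b → bp.Pairwise (· ≥ ·) →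
        SupportSetConn b =
          {nu | IsPartition nu ∧ DomLE bp nu ∧ DomLE nu [b.sum - 2, 2]}) ↔
      ¬ (b.sum ≤ 2 * m ∧ (b.getD 0 0 = m ∨ b.getD 2 0 = m))) ∧
    ((b.sum ≤ 2 * m ∧ (b.getD 0 0 = m ∨ b.getD 2 0 = m)) →
      (∀ bp : List ℕ, bp.Perm b → bp.Pairwise (· ≥ ·) →
        DomLE bp [m, b.sum - m] ∧ DomLE [m, b.sum - m] [b.sum - 2, 2]) ∧
      ¬ InSupportConn b [m, b.sum - m]) := by
  obtain ⟨x, y, z, rfl⟩ := List.length_eq_three.1 hlen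
  exact length_three_full_support_classification_general x y z
    (two_pos.trans_le (h2 x (by simp))) (h2 y (by simp)) (two_pos.trans_le (h2 z (by simp))) m hm

end RibbonSupport
end

section
/- Let α be a partition with all parts at least 2, let π be a permutation of {1,…,ℓ(α)} and α_π the corresponding rearrangement of α, let R_{α_π} be the connected ribbon with row lengths α_π and overlapping partition p^π, and let ν ∈ [α, (|α|−ℓ(α)+1, ℓ(α)−1)] be a partition. If c_{R_{α_π}}^ν > 0, i.e. there exists an LR tableau of shape R_{α_π} and content ν, then ν_i ≤ Σ_{q=i}^{ℓ(α)} α_q − p^π_i for all 1 ≤ i ≤ ℓ(p^π). -/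
namespace RibbonSupport

/-!
Delete the `i` longest rows and call the other rows kept. Follow a letter upwards through the rows,
starting with `i + 1` at the bottom and lowering it by one at each deleted row. Each row is read
in weakly decreasing order, so by the lattice condition the number of letters `c + 1` in the rows
down to and including a deleted one is at most the number of letters `c` strictly above it. Hence
`ν_{i+1}` is at most the sum, over the kept rows, of the number of occurrences of the letter
followed in that row. Two adjacent kept rows follow the same letter, and the column they share is
strictly increasing, so the upper row has a smaller letter or the lower row has a larger one. Thus
each of the `p_{i+1}` adjacent pairs of kept rows uses up a box not holding the letter followed,
and at most two pairs meet in a row, using up different boxes of it.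
-/

/-- The letters of row `i`, from right to left, in the filling with reading word `w` of the
ribbon with row lengths `a`. -/
def ribbonRow (a w : List ℕ) (i : ℕ) : List ℕ := (w.drop (rowOffset a i)).take (a.getD i 0)

section RibbonRows

variable {a w : List ℕ} {ov : ℕ → Bool}

lemma rowOffset_succ (a : List ℕ) (i : ℕ) : rowOffset a (i + 1) = rowOffset a i + a.getD i 0 := by
  cases h : a[i]? <;> simp [rowOffset, List.take_add_one, List.getD_eq_getElem?_getD, h]

lemma rowOffset_eq_sum_range (a : List ℕ) (i : ℕ) :
    rowOffset a i = ∑ j ∈ Finset.range i, a.getD j 0 := by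
  induction i with
  | zero => simp [rowOffset]
  | succ i ih => rw [rowOffset_succ, ih, Finset.sum_range_succ]

lemma rowOffset_length (a : List ℕ) : rowOffset a a.length = a.sum := by
  rw [rowOffset, List.take_length]

lemma rowOffset_le_sum (a : List ℕ) (i : ℕ) : rowOffset a i ≤ a.sum := by
  rw [← a.sum_take_add_sum_drop i]
  exact Nat.le_add_right _ _

lemma sum_drop_eq_sum_Ico (a : List ℕ) (i : ℕ) :
    (a.drop i).sum = ∑ j ∈ Finset.Ico i a.length, a.getD j 0 := by
  rcases le_total i a.length with hi | hi
  · have hsplit := Finset.sum_range_add_sum_Ico (a.getD · 0) hi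
    rw [← rowOffset_eq_sum_range, ← rowOffset_eq_sum_range, rowOffset_length,
      ← a.sum_take_add_sum_drop i] at hsplit
    exact (Nat.add_left_cancel hsplit).symm
  · rw [List.drop_eq_nil_of_le hi, Finset.Ico_eq_empty_of_le hi, List.sum_nil, Finset.sum_empty]

lemma take_rowOffset_succ (a w : List ℕ) (i : ℕ) :
    w.take (rowOffset a (i + 1)) = w.take (rowOffset a i) ++ ribbonRow a w i := by
  rw [rowOffset_succ, List.take_add, ribbonRow]

lemma getElem_ribbonRow {i j : ℕ} (hj : j < (ribbonRow a w i).length) :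
    (ribbonRow a w i)[j] = w.getD (rowOffset a i + j) 0 := by
  have hjw : rowOffset a i + j < w.length := by
    simp only [ribbonRow, List.length_take, List.length_drop] at hj
    omega
  rw [List.getD_eq_getElem _ _ hjw]
  simp [ribbonRow]

namespace IsRibbonWord

lemma length_ribbonRow (hw : IsRibbonWord a ov w) (i : ℕ) :
    (ribbonRow a w i).length = a.getD i 0 := by
  have hle := rowOffset_le_sum a (i + 1)
  rw [rowOffset_succ, ← hw.1] at hle
  rw [ribbonRow, List.length_take, List.length_drop]
  omega

lemma pairwise_ge_ribbonRow (hw : IsRibbonWord a ov w) (i : ℕ) :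
    (ribbonRow a w i).Pairwise (· ≥ ·) := by
  rw [← List.isChain_iff_pairwise, List.isChain_iff_getElem]
  intro j hj
  have hja : j + 1 < a.getD i 0 := hw.length_ribbonRow i ▸ hj
  have hi : i < a.length := by
    by_contra! hi
    rw [List.getD_eq_default _ _ hi] at hja
    omega
  rw [getElem_ribbonRow, getElem_ribbonRow]
  exact hw.2.1 i j hi hja

lemma exists_lt_of_overlap (hw : IsRibbonWord a ov w) (ha : ∀ x ∈ a, 0 < x) {i : ℕ}
    (hi : i + 1 < a.length) (hov : ov i = true) :
    ∃ x ∈ ribbonRow a w i, ∃ y ∈ ribbonRow a w (i + 1), x < y := by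
  have hpos : ∀ k < a.length, 0 < (ribbonRow a w k).length := by
    intro k hk
    rw [hw.length_ribbonRow, List.getD_eq_getElem _ _ hk]
    exact ha _ (List.getElem_mem hk)
  have hlast := hpos i (by omega)
  have hfirst := hpos (i + 1) hi
  refine ⟨_, List.getElem_mem (Nat.sub_one_lt hlast.ne'), _, List.getElem_mem hfirst, ?_⟩
  have hlt := hw.2.2 i hi hov
  rw [getElem_ribbonRow, getElem_ribbonRow, hw.length_ribbonRow, Nat.add_zero]
  rw [hw.length_ribbonRow] at hlast
  rwa [rowOffset_succ, Nat.add_sub_assoc hlast, ← rowOffset_succ] at hlt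

end IsRibbonWord

end RibbonRows

section LatticeWords

lemma takeWhile_eq_filter_of_pairwise_ge {α : Type*} [LinearOrder α] (c : α) {u : List α}
    (hu : u.Pairwise (· ≥ ·)) : u.takeWhile (c < ·) = u.filter (c < ·) := by
  induction u with
  | nil => rfl
  | cons x u ih =>
    obtain ⟨hx, hu⟩ := List.pairwise_cons.1 hu
    by_cases hc : c < x
    · simp [hc, ih hu]
    · have hfilter : u.filter (c < ·) = [] := by
        simpa using fun y hy => (hx y hy).trans (not_lt.1 hc)
      simp [hc, hfilter]

lemma IsYam.count_succ_le_of_prefix {v w : List ℕ} (hw : IsYam w) (hv : v <+: w) {c : ℕ}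
    (hc : 0 < c) : v.count (c + 1) ≤ v.count c := by
  obtain ⟨c, rfl⟩ := Nat.exists_eq_add_one.2 hc
  rw [List.prefix_iff_eq_take.1 hv]
  exact hw v.length c

lemma IsYam.count_succ_append_le {u v w : List ℕ} (hw : IsYam w) (hvu : v ++ u <+: w)
    (hu : u.Pairwise (· ≥ ·)) {c : ℕ} (hc : 0 < c) : (v ++ u).count (c + 1) ≤ v.count c := by
  -- As `u` decreases, all its letters `c + 1` come before its first letter `c`.
  have hprefix : v ++ u.takeWhile (c < ·) <+: w :=
    ((List.prefix_append_right_inj v).2 (List.takeWhile_prefix _)).trans hvu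
  have hcount := hw.count_succ_le_of_prefix hprefix hc
  rw [takeWhile_eq_filter_of_pairwise_ge c hu] at hcount
  have hnone : (u.filter (c < ·)).count c = 0 := List.count_eq_zero.2 (by simp)
  simpa [List.count_append, hnone] using hcount

/-- The count of the letter `k + Nat.count (¬ kept ·) i` in the first `i` rows is followed from
row to row upwards; crossing a row that is not kept lowers the letter by one. -/
lemma IsYam.count_take_rowOffset_le {a w : List ℕ} {ov : ℕ → Bool} (hy : IsYam w)
    (hw : IsRibbonWord a ov w) (kept : ℕ → Prop) [DecidablePred kept] {k : ℕ} (hk : 0 < k)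
    (i : ℕ) :
    (w.take (rowOffset a i)).count (k + Nat.count (¬ kept ·) i) ≤
      ∑ j ∈ Finset.range i with kept j,
        (ribbonRow a w j).count (k + Nat.count (¬ kept ·) j) := by
  induction i with
  | zero => simp [rowOffset]
  | succ i ih =>
    rw [Finset.sum_filter] at ih ⊢
    rw [Finset.sum_range_succ, take_rowOffset_succ, Nat.count_succ]
    by_cases hi : kept i
    · simpa [hi, List.count_append] using ih
    · have hstep := hy.count_succ_append_le (take_rowOffset_succ a w i ▸ List.take_prefix _ w)
        (hw.pairwise_ge_ribbonRow i) (Nat.add_pos_left hk (Nat.count (¬ kept ·) i))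
      simpa [hi, add_assoc] using hstep.trans ih

end LatticeWords

section ColumnStrictRows

variable {α : Type*} [LinearOrder α]

lemma ite_exists_le_countP {β : Type*} (p : β → Prop) [DecidablePred p] (u : List β) :
    (if ∃ x ∈ u, p x then 1 else 0) ≤ u.countP p := by
  split_ifs with h
  · exact List.countP_pos_iff.2 (by simpa using h)
  · exact Nat.zero_le _

lemma count_add_countP_lt_add_countP_gt (c : α) (u : List α) :
    u.count c + u.countP (· < c) + u.countP (c < ·) = u.length := by
  induction u with
  | nil => rfl
  | cons x u ih => grind

lemma card_adjacent_kept_le (rows : ℕ → List α) {n : ℕ}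
    (hrows : ∀ j, j + 1 < n → ∃ x ∈ rows j, ∃ y ∈ rows (j + 1), x < y)
    (kept : ℕ → Prop) [DecidablePred kept] (c : ℕ → α) (hc : ∀ j, kept j → c (j + 1) = c j) :
    ((Finset.range (n - 1)).filter fun j => kept j ∧ kept (j + 1)).card ≤
      (((Finset.range n).filter kept).filter fun j => ∃ x ∈ rows j, x < c j).card +
        (((Finset.range n).filter kept).filter fun j => ∃ x ∈ rows j, c j < x).card := by
  set below := ((Finset.range n).filter kept).filter fun j => ∃ x ∈ rows j, x < c j with hbelow
  set above := ((Finset.range n).filter kept).filter fun j => ∃ x ∈ rows j, c j < x with habove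
  calc
    _ ≤ (below ∪ above.image (· - 1)).card := by
      refine Finset.card_le_card fun j hj => ?_
      simp only [Finset.mem_filter, Finset.mem_range] at hj
      obtain ⟨hjn, hkept, hkept'⟩ := hj
      obtain ⟨x, hx, y, hy, hxy⟩ := hrows j (by omega)
      rw [Finset.mem_union]
      rcases lt_or_ge x (c j) with hxc | hcx
      · left
        simpa [hbelow, hkept, show j < n by omega] using ⟨x, hx, hxc⟩
      · right
        refine Finset.mem_image.2 ⟨j + 1, ?_, rfl⟩
        simpa [habove, hkept', hc j hkept, show j + 1 < n by omega] using ⟨y, hy, hcx.trans_lt hxy⟩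
    _ ≤ below.card + above.card :=
      (Finset.card_union_le _ _).trans (Nat.add_le_add_left Finset.card_image_le _)

lemma sum_count_add_card_adjacent_kept_le (rows : ℕ → List α) {n : ℕ}
    (hrows : ∀ j, j + 1 < n → ∃ x ∈ rows j, ∃ y ∈ rows (j + 1), x < y)
    (kept : ℕ → Prop) [DecidablePred kept] (c : ℕ → α) (hc : ∀ j, kept j → c (j + 1) = c j) :
    ∑ j ∈ Finset.range n with kept j, (rows j).count (c j) +
        ((Finset.range (n - 1)).filter fun j => kept j ∧ kept (j + 1)).card ≤
      ∑ j ∈ Finset.range n with kept j, (rows j).length := by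
  refine (Nat.add_le_add_left (card_adjacent_kept_le rows hrows kept c hc) _).trans ?_
  rw [Finset.card_filter, Finset.card_filter, ← add_assoc, ← Finset.sum_add_distrib,
    ← Finset.sum_add_distrib]
  refine Finset.sum_le_sum fun j _ => ?_
  rw [← count_add_countP_lt_add_countP_gt (c j)]
  exact Nat.add_le_add (Nat.add_le_add_left (ite_exists_le_countP _ _) _) (ite_exists_le_countP _ _)

end ColumnStrictRows

section DeletionOrder

variable {g : List ℕ}

lemma delRank_lt_length {j : ℕ} (hj : j < g.length) : delRank g j < g.length := by
  refine lt_of_lt_of_eq ?_ (Finset.card_range g.length)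
  exact Finset.card_lt_card (Finset.filter_ssubset.2 ⟨j, by simpa using hj, by simp⟩)

lemma delRank_lt_delRank {i j : ℕ} (hi : i < g.length)
    (h : g.getD j 0 < g.getD i 0 ∨ (g.getD i 0 = g.getD j 0 ∧ i < j)) :
    delRank g i < delRank g j := by
  refine Finset.card_lt_card
    ((Finset.ssubset_iff_of_subset ?_).2 ⟨i, by simpa using ⟨hi, h⟩, by simp⟩)
  refine Finset.monotone_filter_right _ fun l _ hl => ?_
  omega

lemma getD_le_getD_of_delRank_lt {i j : ℕ} (hj : j < g.length)
    (h : delRank g i < delRank g j) : g.getD j 0 ≤ g.getD i 0 := by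
  by_contra! hlt
  exact h.not_gt (delRank_lt_delRank hj (Or.inl hlt))

lemma bijOn_delRank (g : List ℕ) :
    Set.BijOn (delRank g) (Finset.range g.length) (Finset.range g.length) := by
  have hmaps : Set.MapsTo (delRank g) (Finset.range g.length) (Finset.range g.length) :=
    fun j hj => by simpa using delRank_lt_length (by simpa using hj)
  have hinj : Set.InjOn (delRank g) (Finset.range g.length) := by
    intro i hi j hj hij
    simp only [Finset.coe_range, Set.mem_Iio] at hi hj
    by_contra hne
    have hnij := mt (delRank_lt_delRank (j := j) hi) hij.not_lt
    have hnji := mt (delRank_lt_delRank (j := i) hj) hij.not_gt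
    omega
  exact ⟨hmaps, hinj, Finset.surjOn_of_injOn_of_card_le _ hmaps hinj le_rfl⟩

lemma getD_delRank {a : List ℕ} (ha : a.Pairwise (· ≥ ·)) (hperm : g.Perm a) {j : ℕ}
    (hj : j < g.length) : a.getD (delRank g j) 0 = g.getD j 0 := by
  let rank : Fin g.length → Fin g.length := fun i => ⟨delRank g i, delRank_lt_length i.2⟩
  have hrank : Function.Injective rank := fun i i' h =>
    Fin.ext ((bijOn_delRank g).injOn (by simp) (by simp) (congrArg Fin.val h))
  let σ : Equiv.Perm (Fin g.length) :=
    Equiv.ofBijective rank (Finite.injective_iff_bijective.1 hrank)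
  have hσ : ∀ i, (σ i : ℕ) = delRank g i := fun _ => rfl
  have hsorted : (List.ofFn (g.get ∘ σ.symm)).Pairwise (· ≥ ·) := by
    rw [List.pairwise_ofFn]
    intro r r' hr
    have hle := getD_le_getD_of_delRank_lt (g := g) (i := σ.symm r) (σ.symm r').2
      (by simpa [← hσ] using hr)
    simpa [List.getD_eq_getElem?_getD] using hle
  have hofFn : (List.ofFn (g.get ∘ σ.symm)).Perm a :=
    (Equiv.Perm.ofFn_comp_perm σ.symm g.get).trans (by rwa [List.ofFn_get])
  have hsymm : σ.symm ⟨delRank g j, delRank_lt_length hj⟩ = ⟨j, hj⟩ := σ.symm_apply_apply ⟨j, hj⟩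
  rw [← hofFn.eq_of_pairwise' hsorted ha,
    List.getD_eq_getElem _ _ (by simpa using delRank_lt_length hj), List.getElem_ofFn,
    Function.comp_apply, hsymm, List.getD_eq_getElem _ _ hj]
  rfl

lemma sum_getD_of_le_delRank {a : List ℕ} (ha : a.Pairwise (· ≥ ·)) (hperm : g.Perm a) (d : ℕ) :
    ∑ j ∈ Finset.range g.length with d ≤ delRank g j, g.getD j 0 = (a.drop d).sum := by
  rw [sum_drop_eq_sum_Ico, ← hperm.length_eq]
  refine Finset.sum_nbij (delRank g) ?_ ((bijOn_delRank g).injOn.mono ?_) ?_ ?_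
  · intro j hj
    simp only [Finset.mem_filter, Finset.mem_range] at hj
    exact Finset.mem_Ico.2 ⟨hj.2, delRank_lt_length hj.1⟩
  · exact Finset.coe_subset.2 (Finset.filter_subset _ _)
  · intro r hr
    rw [Finset.coe_Ico, Set.mem_Ico] at hr
    obtain ⟨j, hj, rfl⟩ := (bijOn_delRank g).surjOn (by simpa using hr.2)
    exact ⟨j, by simpa [hr.1] using hj, rfl⟩
  · intro j hj
    rw [getD_delRank ha hperm (Finset.mem_range.1 (Finset.mem_filter.1 hj).1)]

lemma count_not_le_delRank_le (g : List ℕ) (d : ℕ) :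
    Nat.count (fun j => ¬ d ≤ delRank g j) g.length ≤ d := by
  rw [Nat.count_eq_card_filter_range]
  conv_rhs => rw [← Finset.card_range d]
  refine Finset.card_le_card_of_injOn (delRank g) (fun j hj => ?_) ((bijOn_delRank g).injOn.mono ?_)
  · simpa using (Finset.mem_filter.1 hj).2
  · exact Finset.coe_subset.2 (Finset.filter_subset _ _)

lemma getD_ppiList (g : List ℕ) (d : ℕ) :
    (ppiList g).getD d 0 = ((Finset.range (g.length - 1)).filter
      fun j => d ≤ delRank g j ∧ d ≤ delRank g (j + 1)).card := by
  rcases lt_or_ge d g.length with hd | hd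
  · simp [ppiList, List.getD_eq_getElem?_getD, hd]
  · rw [List.getD_eq_default _ _ (by simpa [ppiList] using hd), eq_comm, Finset.card_eq_zero,
      Finset.filter_eq_empty_iff]
    intro j hj
    rw [Finset.mem_range] at hj
    have hlt := delRank_lt_length (show j < g.length by omega)
    omega

end DeletionOrder

/-- In the presence of rows of length one, several consecutive rows may share a column; `ppiList`
then still counts the adjacent pairs of surviving rows. -/
theorem necessary_inequalities_for_rearranged_ribbon_general
    (a g nu : List ℕ) (ha : IsPartition a) (hperm : g.Perm a) (hpos : InSupportConn g nu) (i : ℕ) :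
    nu.getD i 0 + (ppiList g).getD i 0 ≤ (a.drop i).sum := by
  obtain ⟨w, hw, hyam, hcontent, -⟩ := hpos
  have hgpos : ∀ x ∈ g, 0 < x := fun x hx => ha.2 x (hperm.subset hx)
  let kept : ℕ → Prop := fun j => i ≤ delRank g j
  obtain ⟨k, hk⟩ := Nat.exists_eq_add_of_le' (count_not_le_delRank_le g i)
  let letter : ℕ → ℕ := fun j => k + 1 + Nat.count (¬ kept ·) j
  have hletter : ∀ j, kept j → letter (j + 1) = letter j := fun j hj => by
    simp [letter, Nat.count_succ, hj]
  have hcount : nu.getD i 0 = (w.take (rowOffset g g.length)).count (letter g.length) := by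
    rw [rowOffset_length, ← hw.1, List.take_length, ← hcontent]
    congr 1
    simp only [letter, kept]
    omega
  calc nu.getD i 0 + (ppiList g).getD i 0
      ≤ ∑ j ∈ Finset.range g.length with kept j, (ribbonRow g w j).count (letter j) +
          (ppiList g).getD i 0 :=
        Nat.add_le_add_right (hcount ▸ hyam.count_take_rowOffset_le hw kept k.succ_pos _) _
    _ ≤ ∑ j ∈ Finset.range g.length with kept j, (ribbonRow g w j).length := by
        rw [getD_ppiList]
        exact sum_count_add_card_adjacent_kept_le (ribbonRow g w)
          (fun j hj => hw.exists_lt_of_overlap hgpos hj rfl) kept letter hletter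
    _ = (a.drop i).sum := by
        simp only [hw.length_ribbonRow]
        exact sum_getD_of_le_delRank ha.1 hperm i

/-- Theorem `ineqcomposition`: let `a` be a partition with parts ≥ 2,
`g` a rearrangement of `a`, `R_g` the connected ribbon with row lengths `g` and overlapping
partition `p^π = ppiList g`, and `nu ∈ [a, (|a|−ℓ(a)+1, ℓ(a)−1)]` a partition.  If
`c_{R_g}^{nu} > 0` then `ν_i ≤ Σ_{q=i}^{ℓ(a)} a_q − p^π_i` for all `1 ≤ i ≤ ℓ(p^π)`. -/
theorem necessary_inequalities_for_rearranged_ribbon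
    (a g nu : List ℕ) (ha : IsPartition a) (h2 : PartsGE a 2)
    (hperm : g.Perm a) (hnu : IsPartition nu)
    (hint : DomLE a nu ∧ DomLE nu [a.sum - (a.length - 1), a.length - 1])
    (hpos : InSupportConn g nu) :
    ∀ i, i < lenp (ppiList g) →
      nu.getD i 0 + (ppiList g).getD i 0 ≤ (a.drop i).sum :=
  fun i _ => necessary_inequalities_for_rearranged_ribbon_general a g nu ha hperm hpos i

end RibbonSupport
end
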